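/- Let X be a metrizable topological space equipped with its Borel σ-algebra, let φ : ℝ → X → X be a continuous flow on X, and let U, V ⊆ X be open sets with U ∩ V = ∅. Assume that for every v ∈ X with v ∉ U and such that {t > 0 : φ_t(v) ∈ U} is nonempty, one has liminf_{T→∞} (1/T)·λ({t ∈ [0, T] : φ_t(v) ∈ U}) ≤ 2/3. Let μ_x and μ_y be φ-invariant Borel probability measures on X that are ergodic for φ and satisfy μ_x(U) = 1 and μ_y(V) = 1. Then the measure μ = (3/4)·μ_x + (1/4)·μ_y is a φ-invariant Borel probability measure that does not belong to the closure, in the topology of weak convergence on Borel probability measures, of the set of φ-invariant Borel probability measures that are ergodic for φ. In particular, the ergodic measures of φ are not dense in the space of φ-invariant Borel probability measures. -/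

import Mathlib

open Set Filter MeasureTheory ENNReal

/-- maximal function -/
noncomputable def maxFn {X : Type*} (T : X → X) (h : X → ℝ) : ℕ → X → ℝ
  | 0 => fun _ => 0
  | n + 1 => fun x => max 0 (h x + maxFn T h n (T x))

theorem maxFn_nonneg {X : Type*} (T : X → X) (h : X → ℝ) (n : ℕ) (x : X) :
    0 ≤ maxFn T h n x := by
  cases n with
  | zero => exact le_rfl
  | succ n => exact le_max_left _ _

theorem maxFn_mono {X : Type*} (T : X → X) (h : X → ℝ) (n : ℕ) :
    ∀ x, maxFn T h n x ≤ maxFn T h (n + 1) x := by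
  induction n with
  | zero => intro x; exact maxFn_nonneg T h 1 x
  | succ n ih =>
    intro x
    exact max_le_max le_rfl (add_le_add le_rfl (ih (T x)))

theorem maxFn_integrable {X : Type*} [MeasurableSpace X] {μ : Measure X} {T : X → X}
    (hT : MeasurePreserving T μ μ) {h : X → ℝ} (hh : Integrable h μ) (n : ℕ) :
    Integrable (maxFn T h n) μ := by
  induction n with
  | zero => exact integrable_zero _ _ _
  | succ n ih =>
    exact (integrable_zero X ℝ μ).sup (hh.add (hT.integrable_comp_of_integrable ih))

theorem maxFn_measurable {X : Type*} [MeasurableSpace X] {T : X → X}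
    (hT : Measurable T) {h : X → ℝ} (hh : Measurable h) (n : ℕ) :
    Measurable (maxFn T h n) := by
  induction n with
  | zero => exact measurable_const
  | succ n ih => exact measurable_const.max (hh.add (ih.comp hT))

theorem maximal_ergodic {X : Type*} [MeasurableSpace X] {μ : Measure X} {T : X → X}
    (hT : MeasurePreserving T μ μ) {h : X → ℝ} (hhm : Measurable h) (hh : Integrable h μ)
    (hpos : ∀ᵐ x ∂μ, ∃ n, 0 < maxFn T h n x) : 0 ≤ ∫ x, h x ∂μ := by
  have key : ∀ n, 0 ≤ ∫ x, {x | 0 < maxFn T h n x}.indicator h x ∂μ := by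
    intro n
    have hE : MeasurableSet {x | 0 < maxFn T h n x} :=
      measurableSet_lt measurable_const (maxFn_measurable hT.measurable hhm n)
    have hi := maxFn_integrable hT hh n
    have hi2 : Integrable (fun x => maxFn T h n (T x)) μ := hT.integrable_comp_of_integrable hi
    have e : ∫ x, maxFn T h n (T x) ∂μ = ∫ x, maxFn T h n x ∂μ := by
      have := integral_map (μ := μ) hT.measurable.aemeasurable (f := maxFn T h n)
        (maxFn_measurable hT.measurable hhm n).aestronglyMeasurable
      rw [hT.map_eq] at this
      exact this.symm
    have le : ∫ x, maxFn T h n x ∂μ ≤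
        ∫ x, ({x | 0 < maxFn T h n x}.indicator h x + maxFn T h n (T x)) ∂μ := by
      refine integral_mono hi ((hh.indicator hE).add hi2) (fun x => ?_)
      by_cases hx : 0 < maxFn T h n x
      · simp only [indicator, mem_setOf_eq, hx, if_true]
        cases n with
        | zero => exact absurd hx (lt_irrefl _)
        | succ n =>
          have : maxFn T h (n + 1) x = max 0 (h x + maxFn T h n (T x)) := rfl
          have h2 := maxFn_mono T h n (T x)
          rcases max_cases 0 (h x + maxFn T h n (T x)) with h3 | h3 <;> linarith
      · simp only [indicator, mem_setOf_eq, hx, if_false]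
        have := maxFn_nonneg T h n (T x)
        linarith
    rw [integral_add (hh.indicator hE) hi2, e] at le
    linarith
  have lim : Tendsto (fun n => ∫ x, {x | 0 < maxFn T h n x}.indicator h x ∂μ) atTop
      (nhds (∫ x, h x ∂μ)) := by
    refine tendsto_integral_of_dominated_convergence (fun x => ‖h x‖) ?_ hh.norm ?_ ?_
    · intro n
      exact (hhm.indicator (measurableSet_lt measurable_const
        (maxFn_measurable hT.measurable hhm n))).aestronglyMeasurable
    · intro n
      exact Eventually.of_forall fun x => norm_indicator_le_norm_self _ _
    · filter_upwards [hpos] with x hx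
      obtain ⟨n, hn⟩ := hx
      refine tendsto_const_nhds.congr' ?_
      filter_upwards [eventually_ge_atTop n] with m hm
      have : 0 < maxFn T h m x :=
        hn.trans_le (monotone_nat_of_le_succ (f := fun n => maxFn T h n x)
          (fun n => maxFn_mono T h n x) hm)
      simp [indicator, this]
  exact ge_of_tendsto' lim key

section flow

variable {X : Type*} [TopologicalSpace X] [TopologicalSpace.MetrizableSpace X]
  [MeasurableSpace X] [BorelSpace X]

/-- occupation time -/
noncomputable def occ (φ : Flow ℝ X) (U : Set X) (T : ℝ) (v : X) : ℝ :=
  ∫ t in (0 : ℝ)..T, U.indicator (fun _ => (1 : ℝ)) (φ t v)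

theorem ind_joint (φ : Flow ℝ X) {U : Set X} (hU : IsOpen U) :
    Measurable (fun p : X × ℝ => U.indicator (fun _ => (1 : ℝ)) (φ p.2 p.1)) := by
  have hc : Continuous (fun p : X × ℝ => φ p.2 p.1) :=
    φ.continuous continuous_snd continuous_fst
  exact (measurable_const.indicator hU.measurableSet).comp hc.measurable

theorem ind_meas (φ : Flow ℝ X) {U : Set X} (hU : IsOpen U) (v : X) :
    Measurable (fun t : ℝ => U.indicator (fun _ => (1 : ℝ)) (φ t v)) :=
  (ind_joint φ hU).comp (measurable_const.prodMk measurable_id)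

theorem ind_bd (U : Set X) (x : X) :
    0 ≤ U.indicator (fun _ => (1 : ℝ)) x ∧ U.indicator (fun _ => (1 : ℝ)) x ≤ 1 := by
  by_cases h : x ∈ U <;> simp [h]

theorem ind_ii (φ : Flow ℝ X) {U : Set X} (hU : IsOpen U) (v : X) (a b : ℝ) :
    IntervalIntegrable (fun t : ℝ => U.indicator (fun _ => (1 : ℝ)) (φ t v)) volume a b := by
  refine (intervalIntegrable_const (c := (1 : ℝ))).mono_fun
    (ind_meas φ hU v).aestronglyMeasurable (Eventually.of_forall fun t => ?_)
  have := ind_bd U (φ t v)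
  simp only [Real.norm_eq_abs, abs_of_nonneg this.1, abs_one]
  exact this.2

theorem ind_abs (φ : Flow ℝ X) (U : Set X) (v : X) (a b : ℝ) :
    |∫ t in a..b, U.indicator (fun _ => (1 : ℝ)) (φ t v)| ≤ |b - a| := by
  have := intervalIntegral.norm_integral_le_of_norm_le_const (a := a) (b := b) (C := 1)
    (f := fun t => U.indicator (fun _ => (1 : ℝ)) (φ t v)) (fun t _ => by
      have := ind_bd U (φ t v)
      simp only [Real.norm_eq_abs, abs_of_nonneg this.1]
      exact this.2)
  simpa using this

theorem occ_flow (φ : Flow ℝ X) (U : Set X) (T s : ℝ) (v : X) :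
    occ φ U T (φ s v) = ∫ t in s..(T + s), U.indicator (fun _ => (1 : ℝ)) (φ t v) := by
  have := intervalIntegral.integral_comp_add_right (a := 0) (b := T)
    (fun t => U.indicator (fun _ => (1 : ℝ)) (φ t v)) s
  rw [zero_add] at this
  rw [← this, occ]
  simp only [φ.map_add]

theorem occ_succ (φ : Flow ℝ X) {U : Set X} (hU : IsOpen U) (T : ℝ) (v : X) :
    occ φ U (T + 1) v = occ φ U 1 v + occ φ U T (φ 1 v) := by
  rw [occ_flow, occ, occ, intervalIntegral.integral_add_adjacent_intervals]
  · exact ind_ii φ hU v _ _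
  · exact ind_ii φ hU v _ _

theorem occ_near (φ : Flow ℝ X) {U : Set X} (hU : IsOpen U) (T s : ℝ) (v : X) :
    |occ φ U T (φ s v) - occ φ U T v| ≤ 2 * |s| := by
  have i := ind_ii φ hU v
  have h1 := intervalIntegral.integral_add_adjacent_intervals (i 0 s) (i s (T + s))
  have h2 := intervalIntegral.integral_add_adjacent_intervals (i 0 T) (i T (T + s))
  have b1 := ind_abs φ U v 0 s
  have b2 := ind_abs φ U v T (T + s)
  rw [occ_flow, occ]
  simp only [sub_zero, add_sub_cancel_left] at b1 b2
  rw [abs_le] at *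
  constructor <;> linarith

theorem occ_mono (φ : Flow ℝ X) {U : Set X} (hU : IsOpen U) {a b : ℝ} (hab : a ≤ b) (v : X) :
    occ φ U a v ≤ occ φ U b v := by
  have i := ind_ii φ hU v
  have h1 := intervalIntegral.integral_add_adjacent_intervals (i 0 a) (i a b)
  have : 0 ≤ ∫ t in a..b, U.indicator (fun _ => (1 : ℝ)) (φ t v) :=
    intervalIntegral.integral_nonneg hab (fun t _ => (ind_bd U _).1)
  rw [occ, occ]; linarith

theorem occ_meas (φ : Flow ℝ X) {U : Set X} (hU : IsOpen U) (T : ℝ) (hT : 0 ≤ T) :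
    Measurable (occ φ U T) := by
  have : occ φ U T = fun v => ∫ t in Ioc 0 T, U.indicator (fun _ => (1 : ℝ)) (φ t v) := by
    funext v; rw [occ, intervalIntegral.integral_of_le hT]
  rw [this]
  exact ((ind_joint φ hU).stronglyMeasurable.integral_prod_right').measurable

theorem occ_vol (φ : Flow ℝ X) {U : Set X} (hU : IsOpen U) (T : ℝ) (hT : 0 ≤ T) (v : X) :
    (volume {t ∈ Icc (0 : ℝ) T | φ t v ∈ U}).toReal = occ φ U T v := by
  have hm : MeasurableSet {t : ℝ | φ t v ∈ U} :=
    (hU.preimage (φ.continuous continuous_id continuous_const)).measurableSet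
  have : (fun t : ℝ => U.indicator (fun _ => (1 : ℝ)) (φ t v))
      = {t : ℝ | φ t v ∈ U}.indicator (fun _ => (1 : ℝ)) := by
    funext t; simp [indicator]
  rw [occ, intervalIntegral.integral_of_le hT, ← integral_Icc_eq_integral_Ioc, this,
    setIntegral_indicator hm]
  simp only [integral_const, smul_eq_mul, mul_one, measureReal_restrict_apply_univ]
  rfl

theorem occ_integral (φ : Flow ℝ X) {U : Set X} (hU : IsOpen U) (μ : Measure X)
    [IsProbabilityMeasure μ] (hinv : ∀ t : ℝ, MeasurePreserving (φ t) μ μ) :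
    ∫ v, occ φ U 1 v ∂μ = μ.real U := by
  have : occ φ U 1 = fun v => ∫ t in Ioc (0 : ℝ) 1, U.indicator (fun _ => (1 : ℝ)) (φ t v) := by
    funext v; rw [occ, intervalIntegral.integral_of_le zero_le_one]
  rw [this, integral_integral_swap]
  · have : ∀ t : ℝ, ∫ v, U.indicator (fun _ => (1 : ℝ)) (φ t v) ∂μ = μ.real U := by
      intro t
      have h := integral_map (μ := μ) (hinv t).measurable.aemeasurable
        (f := U.indicator (fun _ => (1 : ℝ)))
        (measurable_const.indicator hU.measurableSet).aestronglyMeasurable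
      rw [(hinv t).map_eq] at h
      rw [← h, integral_indicator hU.measurableSet]
      simp
    simp only [this]
    simp
  · refine Integrable.of_bound (ind_joint φ hU).aestronglyMeasurable 1
      (Eventually.of_forall fun p => ?_)
    have := ind_bd U (φ p.2 p.1)
    simp only [Function.uncurry, Real.norm_eq_abs, abs_of_nonneg this.1]
    exact this.2

theorem maxFn_ge (φ : Flow ℝ X) {U : Set X} (hU : IsOpen U) (d : ℝ) (n : ℕ) :
    ∀ v, d * n - occ φ U n v ≤ maxFn (φ 1) (fun v => d - occ φ U 1 v) n v := by
  induction n with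
  | zero => intro v; simp [maxFn, occ]
  | succ n ih =>
    intro v
    refine le_trans ?_ (le_max_right _ _)
    have := ih (φ 1 v)
    push_cast
    rw [occ_succ φ hU]
    linarith

theorem ergodic_key (φ : Flow ℝ X) {U : Set X} (hU : IsOpen U) (μ : Measure X)
    [IsProbabilityMeasure μ] (hinv : ∀ t : ℝ, MeasurePreserving (φ t) μ μ)
    (herg : ∀ A : Set X, MeasurableSet A → (∀ t : ℝ, (φ t ⁻¹' A : Set X) =ᵐ[μ] A) →
      μ A = 0 ∨ μ A = 1) (c : ℝ) (hc : c < μ.real U) :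
    ∀ᵐ v ∂μ, Tendsto (fun n : ℕ => occ φ U n v - c * n) atTop atTop := by
  obtain ⟨d, hcd, hd⟩ := exists_between hc
  set A : Set X := {v | Tendsto (fun n : ℕ => occ φ U n v - c * n) atTop atTop} with hA
  have hAm : MeasurableSet A := by
    have : A = ⋂ m : ℕ, ⋃ N : ℕ, ⋂ n : ℕ, ⋂ _ : N ≤ n, {v | (m : ℝ) ≤ occ φ U n v - c * n} := by
      ext v
      simp only [hA, mem_setOf_eq, mem_iInter, mem_iUnion]
      rw [tendsto_atTop]
      constructor
      · intro h m; exact eventually_atTop.1 (h m)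
      · intro h b
        obtain ⟨m, hm⟩ := exists_nat_ge b
        exact (eventually_atTop.2 (h m)).mono fun n hn => hm.trans hn
    rw [this]
    refine MeasurableSet.iInter fun m => MeasurableSet.iUnion fun N => MeasurableSet.iInter
      fun n => MeasurableSet.iInter fun _ => ?_
    exact measurableSet_le measurable_const
      ((occ_meas φ hU n n.cast_nonneg).sub measurable_const)
  have hAi : ∀ t : ℝ, φ t ⁻¹' A = A := by
    intro s
    ext v
    constructor
    · intro h
      refine tendsto_atTop_mono (fun n : ℕ => ?_)
        (tendsto_atTop_add_const_right _ (-(2 * |s|)) (show Tendsto _ _ _ from h))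
      have := abs_le.1 (occ_near φ hU n s v)
      linarith
    · intro h
      refine tendsto_atTop_mono (fun n : ℕ => ?_)
        (tendsto_atTop_add_const_right _ (-(2 * |s|)) (show Tendsto _ _ _ from h))
      have := abs_le.1 (occ_near φ hU n s v)
      linarith
  rcases herg A hAm (fun t => by rw [hAi t]; exact EventuallyEq.rfl) with h0 | h1
  · exfalso
    have hint : Integrable (occ φ U 1) μ := by
      refine Integrable.of_bound (occ_meas φ hU 1 zero_le_one).aestronglyMeasurable 1
        (Eventually.of_forall fun v => ?_)
      simpa [occ] using ind_abs φ U v 0 1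
    have hp := maximal_ergodic (hinv 1) (h := fun v => d - occ φ U 1 v)
      (measurable_const.sub (occ_meas φ hU 1 zero_le_one))
      ((integrable_const d).sub hint) (by
        have : ∀ᵐ v ∂μ, v ∉ A := measure_eq_zero_iff_ae_notMem.1 h0
        filter_upwards [this] with v hv
        by_contra! hcon
        apply hv
        have hdc : 0 < d - c := by linarith
        refine tendsto_atTop_mono (fun n : ℕ => ?_)
          (tendsto_natCast_atTop_atTop.const_mul_atTop hdc)
        have h1 := maxFn_ge φ hU d n v
        have h2 := hcon n
        linarith)
    rw [integral_sub (integrable_const d) hint, occ_integral φ hU μ hinv] at hp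
    simp at hp
    linarith
  · exact (prob_compl_eq_zero_iff hAm).2 h1

theorem no_erg (φ : Flow ℝ X) (U V : Set X) (hU : IsOpen U) (hUV : U ∩ V = ∅)
    (hlim : ∀ v : X, v ∉ U → {t : ℝ | 0 < t ∧ φ t v ∈ U}.Nonempty →
      liminf (fun T : ℝ => (volume {t ∈ Icc (0 : ℝ) T | φ t v ∈ U}).toReal / T) atTop
        ≤ 2 / 3) (μ : Measure X)
    [IsProbabilityMeasure μ] (hinv : ∀ t : ℝ, MeasurePreserving (φ t) μ μ)
    (herg : ∀ A : Set X, MeasurableSet A → (∀ t : ℝ, (φ t ⁻¹' A : Set X) =ᵐ[μ] A) →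
      μ A = 0 ∨ μ A = 1) (h1 : 2 / 3 < μ.real U) (h2 : 0 < μ V) : False := by
  obtain ⟨c, hc, hcU⟩ := exists_between h1
  have hk := ergodic_key φ hU μ hinv herg c hcU
  obtain ⟨v, hvV, hv⟩ : ∃ v ∈ V, Tendsto (fun n : ℕ => occ φ U n v - c * n) atTop atTop := by
    by_contra! hcon
    have : μ V = 0 := measure_mono_null (fun v hv => hcon v hv) hk
    exact h2.ne' this
  have hvU : v ∉ U := fun h => by
    have : v ∈ U ∩ V := ⟨h, hvV⟩
    rw [hUV] at this; exact this
  have hev : ∀ᶠ T : ℝ in atTop, c ≤ (volume {t ∈ Icc (0 : ℝ) T | φ t v ∈ U}).toReal / T := by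
    have h3 := (tendsto_nat_floor_atTop (α := ℝ)).eventually (hv.eventually_ge_atTop c)
    filter_upwards [h3, eventually_gt_atTop 0] with T hT hT0
    rw [occ_vol φ hU T hT0.le, le_div_iff₀ hT0]
    have a := occ_mono φ hU (Nat.floor_le hT0.le) v
    have b := (Nat.lt_floor_add_one T).le
    nlinarith
  have hne : {t : ℝ | 0 < t ∧ φ t v ∈ U}.Nonempty := by
    obtain ⟨T, hT, hT0⟩ := (hev.and (eventually_gt_atTop 0)).exists
    by_contra hcon
    have : {t ∈ Icc (0 : ℝ) T | φ t v ∈ U} = ∅ := by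
      ext t
      simp only [mem_setOf_eq, mem_empty_iff_false, iff_false]
      rintro ⟨ht, htU⟩
      rcases ht.1.eq_or_lt with h | h
      · rw [← h, φ.map_zero_apply] at htU; exact hvU htU
      · exact hcon ⟨t, h, htU⟩
    rw [this] at hT
    simp at hT
    linarith
  have hle := hlim v hvU hne
  have : c ≤ liminf (fun T : ℝ => (volume {t ∈ Icc (0 : ℝ) T | φ t v ∈ U}).toReal / T) atTop := by
    refine le_liminf_of_le ?_ hev
    refine IsBoundedUnder.isCoboundedUnder_ge ⟨1, ?_⟩
    rw [eventually_map]
    filter_upwards [eventually_gt_atTop 0] with T hT0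
    rw [occ_vol φ hU T hT0.le, div_le_one hT0]
    have := ind_abs φ U v 0 T
    rw [sub_zero, abs_of_pos hT0] at this
    exact (le_abs_self _).trans this
  linarith

end flow

/-- Abstract form of Proposition 1. Under the recurrence-excursion liminf
hypothesis on the open set `U` (disjoint from the open set `V`), if `μx`, `μy` are
φ-invariant ergodic Borel probability measures with `μx U = 1` and `μy V = 1`, then
`μ = (3/4) μx + (1/4) μy` is a φ-invariant probability measure which does not lie in the
closure (for the topology of weak convergence) of the set of φ-invariant ergodic
probability measures. -/
theorem ergodic_nongeneric_stmt5 {X : Type*} [TopologicalSpace X]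
    [TopologicalSpace.MetrizableSpace X] [MeasurableSpace X] [BorelSpace X]
    (φ : Flow ℝ X) (U V : Set X) (hU : IsOpen U) (hV : IsOpen V) (hUV : U ∩ V = ∅)
    (hlim : ∀ v : X, v ∉ U → {t : ℝ | 0 < t ∧ φ t v ∈ U}.Nonempty →
      liminf (fun T : ℝ => (volume {t ∈ Icc (0 : ℝ) T | φ t v ∈ U}).toReal / T) atTop
        ≤ 2 / 3)
    (μx μy : Measure X) [IsProbabilityMeasure μx] [IsProbabilityMeasure μy]
    (hinvx : ∀ t : ℝ, MeasurePreserving (φ t) μx μx)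
    (hinvy : ∀ t : ℝ, MeasurePreserving (φ t) μy μy)
    (hergx : ∀ A : Set X, MeasurableSet A → (∀ t : ℝ, (φ t ⁻¹' A : Set X) =ᵐ[μx] A) →
      μx A = 0 ∨ μx A = 1)
    (hergy : ∀ A : Set X, MeasurableSet A → (∀ t : ℝ, (φ t ⁻¹' A : Set X) =ᵐ[μy] A) →
      μy A = 0 ∨ μy A = 1)
    (hxU : μx U = 1) (hyV : μy V = 1) :
    IsProbabilityMeasure ((3 / 4 : ℝ≥0∞) • μx + (1 / 4 : ℝ≥0∞) • μy) ∧
    (∀ t : ℝ, MeasurePreserving (φ t)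
      ((3 / 4 : ℝ≥0∞) • μx + (1 / 4 : ℝ≥0∞) • μy)
      ((3 / 4 : ℝ≥0∞) • μx + (1 / 4 : ℝ≥0∞) • μy)) ∧
    (∀ P : ProbabilityMeasure X,
      (P : Measure X) = (3 / 4 : ℝ≥0∞) • μx + (1 / 4 : ℝ≥0∞) • μy →
      P ∉ closure {Q : ProbabilityMeasure X |
        (∀ t : ℝ, MeasurePreserving (φ t) (Q : Measure X) (Q : Measure X)) ∧
        (∀ A : Set X, MeasurableSet A →
          (∀ t : ℝ, (φ t ⁻¹' A : Set X) =ᵐ[(Q : Measure X)] A) →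
          (Q : Measure X) A = 0 ∨ (Q : Measure X) A = 1)}) := by
  have hc : (3 / 4 : ℝ≥0∞) + 1 / 4 = 1 := by
    rw [ENNReal.div_add_div_same, show (3 : ℝ≥0∞) + 1 = 4 by norm_num]
    exact ENNReal.div_self (by norm_num) (by norm_num)
  refine ⟨⟨by simp [hc, -one_div]⟩, fun t => ⟨(hinvx t).measurable, ?_⟩, ?_⟩
  · rw [Measure.map_add _ _ (hinvx t).measurable, Measure.map_smul, Measure.map_smul,
      (hinvx t).map_eq, (hinvy t).map_eq]
  intro P hP hcl
  have hPU : (2 / 3 : ℝ≥0∞) < (P : Measure X) U := by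
    rw [hP]
    simp only [Measure.coe_add, Measure.coe_smul, Pi.add_apply, Pi.smul_apply, hxU, smul_eq_mul,
      mul_one]
    refine lt_of_lt_of_le ?_ le_self_add
    rw [← ENNReal.toReal_lt_toReal (by finiteness) (by finiteness)]
    simp only [ENNReal.toReal_div, ENNReal.toReal_ofNat]
    norm_num
  have hPV : (0 : ℝ≥0∞) < (P : Measure X) V := by
    rw [hP]
    simp only [Measure.coe_add, Measure.coe_smul, Pi.add_apply, Pi.smul_apply, hyV, smul_eq_mul,
      mul_one]
    refine lt_of_lt_of_le ?_ le_add_self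
    simp
  have eU := eventually_lt_of_lt_liminf (lt_of_lt_of_le hPU
    (ProbabilityMeasure.le_liminf_measure_open_of_tendsto (tendsto_id (x := nhds P)) hU))
  have eV := eventually_lt_of_lt_liminf (lt_of_lt_of_le hPV
    (ProbabilityMeasure.le_liminf_measure_open_of_tendsto (tendsto_id (x := nhds P)) hV))
  obtain ⟨Q, ⟨hQ1, hQ2⟩, hQU, hQV⟩ :=
    ((mem_closure_iff_frequently.1 hcl).and_eventually (eU.and eV)).exists
  refine no_erg φ U V hU hUV hlim (Q : Measure X) hQ1 hQ2 ?_ hQV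
  have := (ENNReal.toReal_lt_toReal (by finiteness) (by finiteness)).2 hQU
  simpa [ENNReal.toReal_div, Measure.real] using this
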